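/- If G is the block intersection graph of a balanced incomplete block design with parameters (v, k, 1) and v > k(k−1)² + 1, then the cop number and the zombie number of G both equal k: c(G) = z(G) = k. -/

import Mathlib

open SimpleGraph

/-! ### Pursuit games on graphs

A round of the game is recorded as a pair `(c, r)` where `c : Fin k → V` is the
configuration of the `k` pursuers (cops or zombies) and `r : V` the position of the
evader (robber or survivor).  In a round the pursuers move first (knowing the full
history), then the evader moves (knowing the full history and the pursuers' new
configuration).  Strategies are functions of the full history, so no generality is lost. -/

/-- The history of a play: the list of (pursuer configuration, evader position) pairs
for the completed rounds so far. -/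
abbrev GameHist (V : Type*) (k : ℕ) := List ((Fin k → V) × V)

/-- The history determined by the sequences `c` (pursuer configurations) and `r`
(evader positions), recording rounds `0, …, n-1`. -/
def histUpTo {V : Type*} {k : ℕ} (c : ℕ → Fin k → V) (r : ℕ → V) (n : ℕ) : GameHist V k :=
  (List.range n).map fun i => (c i, r i)

/-- The robber/survivor always moves along an edge or stays still. -/
def RobberLegal {V : Type*} (G : SimpleGraph V) (r : ℕ → V) : Prop :=
  ∀ n, r (n+1) = r n ∨ G.Adj (r n) (r (n+1))

/-- At step `n`, each cop stays still or moves along an edge. -/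
def CopStepLegal {V : Type*} (G : SimpleGraph V) {k : ℕ} (c : ℕ → Fin k → V) (n : ℕ) : Prop :=
  ∀ i, c (n+1) i = c n i ∨ G.Adj (c n i) (c (n+1) i)

/-- At step `n`, each zombie moves along an edge to a vertex strictly closer to the
survivor's current position `r n`. -/
def ZombieStepLegal {V : Type*} (G : SimpleGraph V) {k : ℕ} (c : ℕ → Fin k → V) (r : ℕ → V)
    (n : ℕ) : Prop :=
  ∀ i, G.Adj (c n i) (c (n+1) i) ∧ G.dist (c (n+1) i) (r n) < G.dist (c n i) (r n)

/-- The pursuers follow the history-dependent strategy `mv`: their configuration at time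
`n+1` is the strategy applied to the history of rounds `0, …, n`. -/
def FollowsStrat {V : Type*} {k : ℕ} (mv : GameHist V k → Fin k → V)
    (c : ℕ → Fin k → V) (r : ℕ → V) : Prop :=
  ∀ n, c (n+1) = mv (histUpTo c r (n+1))

/-- Starting from the cop configuration `cpos` (the robber then chooses any starting
vertex, and the cops move first), the cops have a strategy catching the robber: in every
play consistent with the strategy there is a time at which some cop and the robber occupy
the same vertex, all cop moves made up to and including the capturing move being legal. -/
def CopsCatchFrom {V : Type*} (G : SimpleGraph V) {k : ℕ} (cpos : Fin k → V) : Prop :=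
  ∃ mv : GameHist V k → Fin k → V,
    ∀ (c : ℕ → Fin k → V) (r : ℕ → V),
      c 0 = cpos → FollowsStrat mv c r → RobberLegal G r →
      ∃ n, ((∃ i, c n i = r n) ∧ ∀ m < n, CopStepLegal G c m) ∨
           ((∃ i, c (n+1) i = r n) ∧ ∀ m ≤ n, CopStepLegal G c m)

/-- `k` cops have a winning strategy on `G`. -/
def CopsWinWith {V : Type*} (G : SimpleGraph V) (k : ℕ) : Prop :=
  ∃ cpos : Fin k → V, CopsCatchFrom G cpos

/-- The cop number of `G`: the least `k` such that `k` cops have a winning strategy. -/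
noncomputable def copNumber {V : Type*} (G : SimpleGraph V) : ℕ :=
  sInf {k | CopsWinWith G k}

/-- Starting from the zombie configuration `zpos` and survivor position `spos`, with the
zombies to move, the zombies have a strategy catching the survivor: in every play
consistent with the strategy there is a time at which some zombie and the survivor occupy
the same vertex, all zombie moves made up to and including the capturing move being legal
(each zombie moves along an edge, strictly decreasing its distance to the survivor). -/
def ZombiesCatchFrom {V : Type*} (G : SimpleGraph V) {k : ℕ} (zpos : Fin k → V) (spos : V) :
    Prop :=
  ∃ mv : GameHist V k → Fin k → V,
    ∀ (c : ℕ → Fin k → V) (r : ℕ → V),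
      c 0 = zpos → r 0 = spos → FollowsStrat mv c r → RobberLegal G r →
      ∃ n, ((∃ i, c n i = r n) ∧ ∀ m < n, ZombieStepLegal G c r m) ∨
           ((∃ i, c (n+1) i = r n) ∧ ∀ m ≤ n, ZombieStepLegal G c r m)

/-- `k` zombies have a winning strategy on `G`: they can choose starting vertices so that
wherever the survivor starts, they catch the survivor. -/
def ZombiesWinWith {V : Type*} (G : SimpleGraph V) (k : ℕ) : Prop :=
  ∃ zpos : Fin k → V, ∀ spos : V, ZombiesCatchFrom G zpos spos

/-- The zombie number of `G`: the least `k` such that `k` zombies have a winning strategy. -/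
noncomputable def zombieNumber {V : Type*} (G : SimpleGraph V) : ℕ :=
  sInf {k | ZombiesWinWith G k}

/-- Starting from the zombie configuration `zpos` and survivor position `spos`, with the
zombies to move, the survivor has a strategy evading capture forever: in every play where
the survivor follows the strategy and the zombies move legally, the survivor's moves are
legal and no zombie ever occupies the survivor's vertex. -/
def SurvivorEvadesFrom {V : Type*} (G : SimpleGraph V) {k : ℕ} (zpos : Fin k → V) (spos : V) :
    Prop :=
  ∃ mv : GameHist V k → (Fin k → V) → V,
    ∀ (c : ℕ → Fin k → V) (r : ℕ → V),
      c 0 = zpos → r 0 = spos →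
      (∀ n, r (n+1) = mv (histUpTo c r (n+1)) (c (n+1))) →
      (∀ n, ZombieStepLegal G c r n) →
      RobberLegal G r ∧ ∀ n, (∀ i, c n i ≠ r n) ∧ (∀ i, c (n+1) i ≠ r n)

/-- Zombie-move legality in the variant where in each round the survivor moves first:
at step `n` each zombie moves along an edge, strictly decreasing its distance to the
survivor's current position `r (n+1)`. -/
def ZombieStepLegalAfter {V : Type*} (G : SimpleGraph V) {k : ℕ} (c : ℕ → Fin k → V)
    (r : ℕ → V) (n : ℕ) : Prop :=
  ∀ i, G.Adj (c n i) (c (n+1) i) ∧ G.dist (c (n+1) i) (r (n+1)) < G.dist (c n i) (r (n+1))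

/-- Starting from the zombie configuration `zpos` and survivor position `spos`, with the
survivor to move (the zombies then responding each round), the zombies have a strategy
catching the survivor. -/
def ZombiesCatchFromSurvivorToMove {V : Type*} (G : SimpleGraph V) {k : ℕ}
    (zpos : Fin k → V) (spos : V) : Prop :=
  ∃ mv : GameHist V k → V → Fin k → V,
    ∀ (c : ℕ → Fin k → V) (r : ℕ → V),
      c 0 = zpos → r 0 = spos →
      (∀ n, c (n+1) = mv (histUpTo c r (n+1)) (r (n+1))) →
      RobberLegal G r →
      ∃ n, (∃ i, c 0 i = r 0) ∨
           ((∃ i, c n i = r (n+1)) ∧ ∀ m < n, ZombieStepLegalAfter G c r m) ∨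
           ((∃ i, c (n+1) i = r (n+1)) ∧ ∀ m ≤ n, ZombieStepLegalAfter G c r m)

/-! ### The graphs `T_x`, the arm graphs `A_n`, and attaching an arm to a graph -/

/-- `|i - j| = 1 or 4` for `i j : Fin 5`, i.e. `i` and `j` are cyclically consecutive. -/
def fin5adj (i j : Fin 5) : Prop :=
  ((i : ℕ) + 1) % 5 = (j : ℕ) ∨ ((j : ℕ) + 1) % 5 = (i : ℕ)

/-- The vertices of the arm graph `A_n`: the vertex `b₂⁻¹` (`start`), the vertex `b₀ⁿ`
(`finish`), and for each copy `T_x` (`x : Fin n`) the inside vertices `a_i^x`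
(`inner x i`), the outside vertices `b_i^x` (`outer x i`) and the center `c^x`
(`center x`). -/
inductive ArmVert (n : ℕ) : Type
  | start : ArmVert n
  | finish : ArmVert n
  | inner : Fin n → Fin 5 → ArmVert n
  | outer : Fin n → Fin 5 → ArmVert n
  | center : Fin n → ArmVert n
  deriving DecidableEq

/-- One direction of the edge relation of the arm graph `A_n`. -/
def armRel (n : ℕ) : ArmVert n → ArmVert n → Prop
  | .inner x i, .inner y j => x = y ∧ fin5adj i j
  | .outer x i, .outer y j => (x = y ∧ fin5adj i j) ∨ ((x : ℕ) + 1 = (y : ℕ) ∧ (i : ℕ) = 2 ∧ (j : ℕ) = 0)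
  | .inner x i, .outer y j => x = y ∧ (i = j ∨ fin5adj i j)
  | .inner x _, .center y => x = y
  | .start, .outer y j => (y : ℕ) = 0 ∧ (j : ℕ) = 0
  | .outer x i, .finish => (x : ℕ) + 1 = n ∧ (i : ℕ) = 2
  | .start, .finish => n = 0
  | _, _ => False

/-- The arm graph `A_n`. -/
def armGraph (n : ℕ) : SimpleGraph (ArmVert n) := SimpleGraph.fromRel (armRel n)

/-- The index of the copy `T_x` containing a vertex of `A_n` (if any). -/
def copyIdx {n : ℕ} : ArmVert n → Option (Fin n)
  | .inner x _ => some x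
  | .outer x _ => some x
  | .center x => some x
  | _ => none

/-- The vertex `b₀ˣ` of `A_n` (for `x = n` this is the final vertex `b₀ⁿ`). -/
def b0 (n x : ℕ) : ArmVert n :=
  if h : x < n then ArmVert.outer ⟨x, h⟩ 0 else ArmVert.finish

/-- The vertex `b₂^{x-1}` of `A_n` (for `x = 0` this is the vertex `b₂⁻¹`). -/
def b2prev (n x : ℕ) : ArmVert n :=
  if h : 1 ≤ x ∧ x - 1 < n then ArmVert.outer ⟨x - 1, h.2⟩ 2 else ArmVert.start

/-- The vertex lies in the copy `T_x`. -/
def InCopy {W : Type*} {n : ℕ} (x : ℕ) (u : W ⊕ ArmVert n) : Prop :=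
  ∃ (a : ArmVert n) (y : Fin n), u = Sum.inr a ∧ copyIdx a = some y ∧ (y : ℕ) = x

/-- One direction of the edge relation of the graph obtained from a graph `H` and the
arm `A_n` by adding an edge from the vertex `b₂⁻¹` of `A_n` to the vertex `v` of `H`. -/
def combRel {W : Type*} (H : SimpleGraph W) (v : W) (n : ℕ) :
    (W ⊕ ArmVert n) → (W ⊕ ArmVert n) → Prop
  | Sum.inl w, Sum.inl w' => H.Adj w w'
  | Sum.inr a, Sum.inr a' => (armGraph n).Adj a a'
  | Sum.inl w, Sum.inr a => w = v ∧ a = ArmVert.start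
  | _, _ => False

/-- The graph obtained from `H` and the arm `A_n` by adding an edge from the vertex
`b₂⁻¹` of `A_n` to the vertex `v` of `H`. -/
def combGraph {W : Type*} (H : SimpleGraph W) (v : W) (n : ℕ) :
    SimpleGraph (W ⊕ ArmVert n) :=
  SimpleGraph.fromRel (combRel H v n)

/-! ### The graphs `Z_{k,m}(H)` -/

/-- The vertices of `Z_{k,m}(H)` where `H` has vertex type `W` and `p = 4*(m-k)`:
the vertices of `H`, for each vertex of `H` a path on `p` vertices, and for each
vertex of `H` `m` copies of the arm graph `A_p`. -/
abbrev ZVert (W : Type*) (m p : ℕ) : Type _ := W ⊕ (W × Fin p) ⊕ (W × Fin m × ArmVert p)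

/-- One direction of the edge relation of `Z_{k,m}(H)`. -/
def zRel {W : Type*} (H : SimpleGraph W) (m p : ℕ) : ZVert W m p → ZVert W m p → Prop
  | Sum.inl w, Sum.inl w' => H.Adj w w'
  | Sum.inl w, Sum.inr (Sum.inl (w', j)) => w = w' ∧ (j : ℕ) = 0
  | Sum.inr (Sum.inl (w, j)), Sum.inr (Sum.inl (w', j')) => w = w' ∧ (j : ℕ) + 1 = (j' : ℕ)
  | Sum.inl w, Sum.inr (Sum.inr (w', _, a)) => w = w' ∧ a = ArmVert.start
  | Sum.inr (Sum.inr (w, i, a)), Sum.inr (Sum.inr (w', i', a')) =>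
      w = w' ∧ i = i' ∧ (armGraph p).Adj a a'
  | _, _ => False

/-- The graph `Z_{k,m}(H)`: to each vertex `v` of `H` we attach (by an edge from `v` to
the first path vertex, resp. to `b₂⁻¹`) one path on `4*(m-k)` vertices and `m` copies of
the arm graph `A_{4*(m-k)}`. -/
def ZGraph {W : Type*} (H : SimpleGraph W) (k m : ℕ) :
    SimpleGraph (ZVert W m (4 * (m - k))) :=
  SimpleGraph.fromRel (zRel H m (4 * (m - k)))

/-! ### Hypercubes and block intersection graphs -/

/-- The `n`-dimensional hypercube: vertices are `Fin n → Bool`, two vertices being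
adjacent exactly when they differ in exactly one coordinate. -/
def hypercube (n : ℕ) : SimpleGraph (Fin n → Bool) :=
  SimpleGraph.fromRel fun x y => ∃ i, x i ≠ y i ∧ ∀ j, j ≠ i → x j = y j

/-- `(P, B)` is a balanced incomplete block design with parameters `(v, k, 1)`:
`P` has `v` points, every block has `k` points, and every pair of distinct points lies
in exactly one block. -/
def IsBIBD (P : Type*) (B : Finset (Finset P)) (v k : ℕ) : Prop :=
  Nat.card P = v ∧ (∀ b ∈ B, b.card = k) ∧
    ∀ p q : P, p ≠ q → ∃! b : Finset P, b ∈ B ∧ p ∈ b ∧ q ∈ b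

/-- The block intersection graph of a collection `B` of blocks: vertices are the blocks,
two distinct blocks being adjacent exactly when they intersect. -/
def blockGraph {P : Type*} (B : Finset (Finset P)) : SimpleGraph {b // b ∈ B} :=
  SimpleGraph.fromRel fun b b' => ∃ p, p ∈ b.val ∧ p ∈ b'.val

/-! ### Zombie-good positions on a graph with an attached arm -/

/-- A position (with the zombies to move) in the game on the graph obtained by attaching
the arm `A_n` to `H` at `v` is `x`-zombie-good if: the survivor is in some `T_y` with
`y ≥ x` or at `b₀ⁿ`; for some `i ≥ 1` the zombies `z_1, …, z_i` are all at `b₀ˣ`; the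
remaining zombies are in `H ∪ {b₂⁻¹} ∪ T_0 ∪ ⋯ ∪ T_{x-1}`; consecutive zombie distances
to the survivor satisfy `0 ≤ d_{j+1} - d_j ≤ 4`; and `d_m - d_1 ≥ n - x`. -/
def ZombieGood {W : Type*} (H : SimpleGraph W) (v : W) (n m x : ℕ)
    (zpos : Fin m → (W ⊕ ArmVert n)) (spos : W ⊕ ArmVert n) : Prop :=
  (∃ a : ArmVert n, spos = Sum.inr a ∧
      ((∃ y : Fin n, copyIdx a = some y ∧ x ≤ (y : ℕ)) ∨ a = ArmVert.finish)) ∧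
  (∃ i : ℕ, 1 ≤ i ∧ i ≤ m ∧
      (∀ j : Fin m, (j : ℕ) < i → zpos j = Sum.inr (b0 n x)) ∧
      (∀ j : Fin m, i ≤ (j : ℕ) →
        (∃ w, zpos j = Sum.inl w) ∨ zpos j = Sum.inr ArmVert.start ∨
          (∃ (a : ArmVert n) (y : Fin n), zpos j = Sum.inr a ∧ copyIdx a = some y ∧ (y : ℕ) < x))) ∧
  (∀ j : Fin m, ∀ h : (j : ℕ) + 1 < m,
      (combGraph H v n).dist spos (zpos j) ≤ (combGraph H v n).dist spos (zpos ⟨(j : ℕ) + 1, h⟩) ∧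
      (combGraph H v n).dist spos (zpos ⟨(j : ℕ) + 1, h⟩) - (combGraph H v n).dist spos (zpos j) ≤ 4) ∧
  (∀ hm : 1 ≤ m,
      n - x ≤ (combGraph H v n).dist spos (zpos ⟨m - 1, by omega⟩) -
        (combGraph H v n).dist spos (zpos ⟨0, by omega⟩))

/-! Call the evader safe if no pursuer shares its vertex or a neighbouring one. A robber who can
always restore safety after the cops have moved is never caught, while `k` zombies win if they can
always answer a safe position by moving to neighbours of the survivor's vertex, leaving the survivor
no safe response.

Suppose there are `j < k` cops. The robber's block meets each of theirs in at most one point, so it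
has a point `x` on none of their blocks. The cops' blocks cover at most `(k - 1) * k` points, and
each of these lies on a single block through `x`, so these blocks reach at most
`k * (k - 1) ^ 2 < v - 1` points other than `x`. Hence some block through `x` misses all the cops,
and the robber moves there.

Against `k` zombies, none of whose blocks meets the survivor's block `r`, the `i`-th zombie moves to
a block through the `i`-th point of `r`. Then every block that meets `r` meets a zombie's block. -/

section Games

variable {V : Type*} {G : SimpleGraph V} {k : ℕ}

/-- An evader at `r` is safe from pursuers at the positions `c` if none of them is at `r` or at a
neighbour of `r`, that is, if they cannot capture it in one move. -/
def EvaderSafe {ι : Type*} (G : SimpleGraph V) (c : ι → V) (r : V) : Prop :=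
  ∀ i, c i ≠ r ∧ ¬ G.Adj (c i) r

lemma not_evaderSafe_iff {ι : Type*} {c : ι → V} {r : V} :
    ¬ EvaderSafe G c r ↔ ∃ i, c i = r ∨ G.Adj (c i) r := by
  simp only [EvaderSafe, not_forall, not_and_or, not_not]

lemma histUpTo_succ (c : ℕ → Fin k → V) (r : ℕ → V) (n : ℕ) :
    histUpTo c r (n + 1) = histUpTo c r n ++ [(c n, r n)] := by
  simp only [histUpTo, List.range_succ, List.map_append, List.map_cons, List.map_nil]

lemma head?_histUpTo_succ (c : ℕ → Fin k → V) (r : ℕ → V) (n : ℕ) :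
    (histUpTo c r (n + 1)).head? = some (c 0, r 0) := by
  simp only [histUpTo, List.range_succ_eq_map, List.map_cons, List.head?_cons]

lemma ZombieStepLegal.copStepLegal {c : ℕ → Fin k → V} {r : ℕ → V} {n : ℕ}
    (h : ZombieStepLegal G c r n) : CopStepLegal G c n :=
  fun i => Or.inr (h i).1

-- Zombie strategies may depend on the survivor's start, which cops read off from the history.
lemma ZombiesWinWith.copsWinWith (h : ZombiesWinWith G k) : CopsWinWith G k := by
  obtain ⟨z, hz⟩ := h
  choose mv hmv using hz
  refine ⟨z, fun hist => hist.head?.elim z fun start => mv start.2 hist, ?_⟩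
  intro c r hc hfollow hr
  have hfollow' : FollowsStrat (mv (r 0)) c r := fun n => by
    simp only [hfollow n, head?_histUpTo_succ, Option.elim_some]
  obtain ⟨n, ⟨hcap, hlegal⟩ | ⟨hcap, hlegal⟩⟩ := hmv (r 0) c r hc rfl hfollow' hr
  · exact ⟨n, Or.inl ⟨hcap, fun m hm => (hlegal m hm).copStepLegal⟩⟩
  · exact ⟨n, Or.inr ⟨hcap, fun m hm => (hlegal m hm).copStepLegal⟩⟩

lemma exists_play (mv : GameHist V k → Fin k → V) (f : (Fin k → V) → V → V)
    (c₀ : Fin k → V) (r₀ : V) :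
    ∃ (c : ℕ → Fin k → V) (r : ℕ → V), c 0 = c₀ ∧ r 0 = r₀ ∧ FollowsStrat mv c r ∧
      ∀ n, r (n + 1) = f (c (n + 1)) (r n) := by
  let round : GameHist V k × (Fin k → V) × V → GameHist V k × (Fin k → V) × V := fun S =>
    (S.1 ++ [S.2], mv (S.1 ++ [S.2]), f (mv (S.1 ++ [S.2])) S.2.2)
  let S : ℕ → GameHist V k × (Fin k → V) × V := fun n => round^[n] ([], c₀, r₀)
  have hS : ∀ n, S (n + 1) = round (S n) := fun n => Function.iterate_succ_apply' round n _
  have hhist : ∀ n, histUpTo (fun n => (S n).2.1) (fun n => (S n).2.2) n = (S n).1 := by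
    intro n
    induction n with
    | zero => rfl
    | succ n ih => rw [histUpTo_succ, ih, hS]
  refine ⟨fun n => (S n).2.1, fun n => (S n).2.2, rfl, rfl, fun n => ?_, fun n => ?_⟩
  · rw [histUpTo_succ, hhist]
    exact congrArg (·.2.1) (hS n)
  · simp only [hS, round]

lemma EvaderSafe.ne_of_copStepLegal {c : ℕ → Fin k → V} {r : V} {n : ℕ}
    (h : EvaderSafe G (c n) r) (hc : CopStepLegal G c n) (i : Fin k) : c (n + 1) i ≠ r := by
  rintro rfl
  exact (hc i).elim (fun heq => (h i).1 heq.symm) (h i).2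

theorem not_copsWinWith_of_evaderSafe (hstart : ∀ c : Fin k → V, ∃ r, EvaderSafe G c r)
    (hmove : ∀ (c : Fin k → V) (r : V), (∀ i, c i ≠ r) →
      ∃ r', (r' = r ∨ G.Adj r r') ∧ EvaderSafe G c r') :
    ¬ CopsWinWith G k := by
  rintro ⟨c₀, mv, hmv⟩
  obtain ⟨r₀, hr₀⟩ := hstart c₀
  have hstep : ∀ (c : Fin k → V) (r : V), ∃ r', (r' = r ∨ G.Adj r r') ∧
      ((∀ i, c i ≠ r) → EvaderSafe G c r') := by
    intro c r
    by_cases hcr : ∀ i, c i ≠ r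
    · obtain ⟨r', hr', hsafe⟩ := hmove c r hcr
      exact ⟨r', hr', fun _ => hsafe⟩
    · exact ⟨r, Or.inl rfl, fun h => absurd h hcr⟩
  choose f hf_legal hf_safe using hstep
  obtain ⟨c, r, rfl, rfl, hfollow, hr⟩ := exists_play mv f c₀ r₀
  have hsafe : ∀ n, (∀ m < n, CopStepLegal G c m) → EvaderSafe G (c n) (r n) := by
    intro n
    induction n with
    | zero => exact fun _ => hr₀
    | succ n ih =>
      intro hlegal
      rw [hr n]
      refine hf_safe _ _ (EvaderSafe.ne_of_copStepLegal ?_ (hlegal n n.lt_succ_self))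
      exact ih fun m hm => hlegal m (hm.trans n.lt_succ_self)
  have hr_legal : RobberLegal G r := fun n => by
    rw [hr n]
    exact hf_legal _ _
  obtain ⟨n, ⟨⟨i, hi⟩, hlegal⟩ | ⟨⟨i, hi⟩, hlegal⟩⟩ := hmv c r rfl hfollow hr_legal
  · exact (hsafe n hlegal i).1 hi
  · exact (hsafe n fun m hm => hlegal m hm.le).ne_of_copStepLegal (hlegal n le_rfl) i hi

lemma dist_lt_dist_of_adj_of_adj {a s b : V} (has : G.Adj a s) (hsb : G.Adj s b) (hne : a ≠ b)
    (hab : ¬ G.Adj a b) : G.dist s b < G.dist a b := by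
  rw [SimpleGraph.dist_eq_one_iff_adj.2 hsb]
  exact (has.reachable.trans hsb.reachable).one_lt_dist_of_ne_of_not_adj hne hab

lemma ZombieStepLegal.eq_of_adj {c : ℕ → Fin k → V} {r : ℕ → V} {n : ℕ}
    (h : ZombieStepLegal G c r n) {i : Fin k} (hi : G.Adj (c n i) (r n)) : c (n + 1) i = r n := by
  obtain ⟨hadj, hlt⟩ := h i
  rw [SimpleGraph.dist_eq_one_iff_adj.2 hi, Nat.lt_one_iff] at hlt
  exact (hadj.symm.reachable.trans hi.reachable).dist_eq_zero_iff.1 hlt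

lemma capture_of_not_evaderSafe {c : ℕ → Fin k → V} {r : ℕ → V} {n : ℕ}
    (hlegal : ∀ m < n, ZombieStepLegal G c r m)
    (hstep : (∀ i, c n i ≠ r n) → ZombieStepLegal G c r n)
    (hn : ¬ EvaderSafe G (c n) (r n)) :
    ((∃ i, c n i = r n) ∧ ∀ m < n, ZombieStepLegal G c r m) ∨
      ((∃ i, c (n + 1) i = r n) ∧ ∀ m ≤ n, ZombieStepLegal G c r m) := by
  by_cases hcap : ∃ i, c n i = r n
  · exact Or.inl ⟨hcap, hlegal⟩
  have hlegal_n := hstep (not_exists.1 hcap)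
  obtain ⟨i, hi⟩ := not_evaderSafe_iff.1 hn
  have hadj : G.Adj (c n i) (r n) := hi.resolve_left fun heq => hcap ⟨i, heq⟩
  refine Or.inr ⟨⟨i, hlegal_n.eq_of_adj hadj⟩, fun m hm => ?_⟩
  obtain hm | rfl := hm.lt_or_eq
  exacts [hlegal m hm, hlegal_n]

/-- The zombies trap the survivor: from any position where the survivor is safe, they can step to
neighbours of its vertex so that none of its replies, staying put included, is safe. -/
def ZombiesTrap (G : SimpleGraph V) (k : ℕ) : Prop :=
  ∀ (c : Fin k → V) (r : V), EvaderSafe G c r →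
    ∃ s : Fin k → V, (∀ i, G.Adj (c i) (s i) ∧ G.Adj (s i) r) ∧
      ∀ r', r' = r ∨ G.Adj r r' → ¬ EvaderSafe G s r'

lemma ZombiesTrap.exists_common_neighbor (h : ZombiesTrap G k) {a b : V} (hne : a ≠ b)
    (hab : ¬ G.Adj a b) : ∃ s, G.Adj a s ∧ G.Adj s b := by
  obtain ⟨s, hs, htrap⟩ := h (fun _ => a) b fun _ => ⟨hne, hab⟩
  obtain ⟨i, -⟩ := not_evaderSafe_iff.1 (htrap b (Or.inl rfl))
  exact ⟨s i, hs i⟩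

lemma ZombiesTrap.exists_adj_dist_lt (h : ZombiesTrap G k) {a b : V} (hne : a ≠ b) :
    ∃ s, G.Adj a s ∧ G.dist s b < G.dist a b := by
  by_cases hab : G.Adj a b
  · refine ⟨b, hab, ?_⟩
    rw [SimpleGraph.dist_self, SimpleGraph.dist_eq_one_iff_adj.2 hab]
    exact one_pos
  · obtain ⟨s, has, hsb⟩ := h.exists_common_neighbor hne hab
    exact ⟨s, has, dist_lt_dist_of_adj_of_adj has hsb hne hab⟩

lemma ZombiesTrap.exists_step (h : ZombiesTrap G k) (c : Fin k → V) (r : V) :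
    ∃ s : Fin k → V,
      ((∀ i, c i ≠ r) → ∀ i, G.Adj (c i) (s i) ∧ G.dist (s i) r < G.dist (c i) r) ∧
      (EvaderSafe G c r → ∀ r', r' = r ∨ G.Adj r r' → ¬ EvaderSafe G s r') := by
  by_cases hsafe : EvaderSafe G c r
  · obtain ⟨s, hs, htrap⟩ := h c r hsafe
    exact ⟨s, fun _ i => ⟨(hs i).1, dist_lt_dist_of_adj_of_adj (hs i).1 (hs i).2
      (hsafe i).1 (hsafe i).2⟩, fun _ => htrap⟩
  by_cases hcr : ∀ i, c i ≠ r
  · choose s hs using fun i => h.exists_adj_dist_lt (hcr i)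
    exact ⟨s, fun _ => hs, fun h' => absurd h' hsafe⟩
  · exact ⟨c, fun h' => absurd h' hcr, fun h' => absurd h' hsafe⟩

theorem ZombiesTrap.zombiesWinWith [Nonempty V] (h : ZombiesTrap G k) : ZombiesWinWith G k := by
  choose s hs_legal hs_trap using h.exists_step
  let z : Fin k → V := fun _ => Classical.arbitrary V
  refine ⟨z, fun _ => ⟨fun hist => hist.getLast?.elim z fun last => s last.1 last.2, ?_⟩⟩
  intro c r _ _ hfollow hr
  have hc : ∀ n, c (n + 1) = s (c n) (r n) := fun n => by
    simp only [hfollow n, histUpTo_succ, List.getLast?_concat, Option.elim_some]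
  have hlegal : ∀ n, (∀ i, c n i ≠ r n) → ZombieStepLegal G c r n := by
    intro n hn i
    rw [hc n]
    exact hs_legal _ _ hn i
  by_cases hsafe : EvaderSafe G (c 0) (r 0)
  · refine ⟨1, capture_of_not_evaderSafe (fun m hm => ?_) (hlegal 1) ?_⟩
    · obtain rfl := Nat.lt_one_iff.1 hm
      exact hlegal 0 fun i => (hsafe i).1
    · rw [hc 0]
      exact hs_trap _ _ hsafe _ (hr 0)
  · exact ⟨0, capture_of_not_evaderSafe (fun m hm => absurd hm m.not_lt_zero) (hlegal 0) hsafe⟩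

end Games

section BlockGraph

variable {P : Type*} {B : Finset (Finset P)}

lemma blockGraph_adj {a b : {b // b ∈ B}} :
    (blockGraph B).Adj a b ↔ a ≠ b ∧ ∃ p, p ∈ a.1 ∧ p ∈ b.1 := by
  simp only [blockGraph, SimpleGraph.fromRel_adj, and_comm (a := _ ∈ b.1), or_self]

lemma exists_mem_of_eq_or_adj {a b : {b // b ∈ B}} (ha : a.1.Nonempty)
    (h : b = a ∨ (blockGraph B).Adj a b) : ∃ p, p ∈ a.1 ∧ p ∈ b.1 := by
  obtain rfl | hab := h
  · exact ha.imp fun _ hp => ⟨hp, hp⟩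
  · exact (blockGraph_adj.1 hab).2

lemma evaderSafe_blockGraph_iff {ι : Type*} {c : ι → {b // b ∈ B}} {r : {b // b ∈ B}}
    (hr : r.1.Nonempty) :
    EvaderSafe (blockGraph B) c r ↔ ∀ i, Disjoint (c i).1 r.1 := by
  refine forall_congr' fun i => ?_
  rw [Finset.disjoint_left]
  constructor
  · rintro ⟨hne, hadj⟩ p hpc hpr
    exact hadj (blockGraph_adj.2 ⟨hne, p, hpc, hpr⟩)
  · intro hdisj
    have hmeet : ¬ ∃ p, p ∈ (c i).1 ∧ p ∈ r.1 := fun ⟨p, hpc, hpr⟩ => hdisj hpc hpr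
    obtain ⟨p, hp⟩ := hr
    exact ⟨fun heq => hmeet ⟨p, heq ▸ hp, hp⟩, fun hadj => hmeet (blockGraph_adj.1 hadj).2⟩

end BlockGraph

namespace IsBIBD

variable {P : Type*} {B : Finset (Finset P)} {v k j : ℕ}

lemma finite (hB : IsBIBD P B v k) (hv : 0 < v) : Finite P :=
  Nat.finite_of_card_ne_zero (hB.1.symm ▸ hv.ne')

lemma exists_pair_mem_block (hB : IsBIBD P B v k) (hv : 1 < v) :
    ∃ b ∈ B, ∃ p ∈ b, ∃ q ∈ b, p ≠ q := by
  have := hB.finite (by omega)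
  have : Nontrivial P := Finite.one_lt_card_iff_nontrivial.1 (by rwa [hB.1])
  obtain ⟨p, q, hpq⟩ := exists_pair_ne P
  obtain ⟨b, hb, hp, hq⟩ := (hB.2.2 p q hpq).exists
  exact ⟨b, hb, p, hp, q, hq, hpq⟩

lemma one_lt_blockSize (hB : IsBIBD P B v k) (hv : 1 < v) : 1 < k := by
  obtain ⟨b, hb, hpair⟩ := hB.exists_pair_mem_block hv
  rw [← hB.2.1 b hb]
  exact Finset.one_lt_card.2 hpair

lemma nonempty_of_mem (hB : IsBIBD P B v k) (hk : 0 < k) {b : Finset P} (hb : b ∈ B) :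
    b.Nonempty :=
  Finset.card_pos.1 ((hB.2.1 b hb).symm ▸ hk)

lemma eq_of_mem_of_mem (hB : IsBIBD P B v k) {a b : Finset P} (ha : a ∈ B) (hb : b ∈ B) {p q : P}
    (hpq : p ≠ q) (hpa : p ∈ a) (hqa : q ∈ a) (hpb : p ∈ b) (hqb : q ∈ b) : a = b :=
  (hB.2.2 p q hpq).unique ⟨ha, hpa, hqa⟩ ⟨hb, hpb, hqb⟩

lemma exists_mem_block_disjoint (hB : IsBIBD P B v k) {U : Finset P} {x : P} (hx : x ∉ U)
    (hU : U.card * (k - 1) + 1 < v) : ∃ b ∈ B, x ∈ b ∧ Disjoint b U := by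
  classical
  have := hB.finite (by omega)
  have := Fintype.ofFinite P
  by_contra! hmeet
  have hline : ∀ q ∈ U, ∃ b ∈ B, x ∈ b ∧ q ∈ b := fun q hq =>
    (hB.2.2 x q fun h => hx (h ▸ hq)).exists
  choose! line hline_mem hx_line hq_line using hline
  have hcover : Finset.univ.erase x ⊆ U.biUnion fun q => (line q).erase x := by
    intro y hy
    have hyx : y ≠ x := Finset.ne_of_mem_erase hy
    obtain ⟨b, hb, hxb, hyb⟩ := (hB.2.2 x y hyx.symm).exists
    obtain ⟨q, hqb, hqU⟩ := Finset.not_disjoint_iff.1 (hmeet b hb hxb)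
    have hxq : x ≠ q := fun h => hx (h ▸ hqU)
    have hb_eq : b = line q := hB.eq_of_mem_of_mem hb (hline_mem q hqU) hxq hxb hqb
      (hx_line q hqU) (hq_line q hqU)
    exact Finset.mem_biUnion.2 ⟨q, hqU, Finset.mem_erase.2 ⟨hyx, hb_eq ▸ hyb⟩⟩
  have hcard : v - 1 ≤ U.card * (k - 1) := calc
    v - 1 = (Finset.univ.erase x).card := by
      rw [Finset.card_erase_of_mem (Finset.mem_univ x), Finset.card_univ,
        ← Nat.card_eq_fintype_card, hB.1]
    _ ≤ (U.biUnion fun q => (line q).erase x).card := Finset.card_le_card hcover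
    _ ≤ U.card * (k - 1) := Finset.card_biUnion_le_card_mul _ _ _ fun q hq => by
      rw [Finset.card_erase_of_mem (hx_line q hq), hB.2.1 _ (hline_mem q hq)]
  omega

lemma card_biUnion_le [DecidableEq P] (hB : IsBIBD P B v k) (c : Fin j → {b // b ∈ B}) :
    (Finset.univ.biUnion fun i => (c i).1).card ≤ j * k := by
  simpa only [Finset.card_univ, Fintype.card_fin] using
    Finset.card_biUnion_le_card_mul Finset.univ (fun i => (c i).1) k
      fun i _ => (hB.2.1 _ (c i).2).le

lemma exists_forall_notMem (hB : IsBIBD P B v k) (c : Fin j → {b // b ∈ B}) (hjk : j * k < v) :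
    ∃ x, ∀ i, x ∉ (c i).1 := by
  classical
  by_contra! hcover
  have hset : ((Finset.univ.biUnion fun i => (c i).1 : Finset P) : Set P) = Set.univ :=
    Set.eq_univ_of_forall fun x => by simpa using hcover x
  have hcard := hB.card_biUnion_le c
  rw [← Set.ncard_coe_finset, hset, Set.ncard_univ, hB.1] at hcard
  exact hjk.not_ge hcard

lemma exists_mem_forall_notMem (hB : IsBIBD P B v k) {c : Fin j → {b // b ∈ B}}
    {r : {b // b ∈ B}} (hcr : ∀ i, c i ≠ r) (hj : j < k) : ∃ x ∈ r.1, ∀ i, x ∉ (c i).1 := by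
  by_contra! hcover
  have hle : r.1.card ≤ (Finset.univ : Finset (Fin j)).card := by
    refine Finset.card_le_card_of_forall_subsingleton (fun x i => x ∈ (c i).1)
      (fun x hx => ?_) fun i _ x hx y hy => ?_
    · obtain ⟨i, hi⟩ := hcover x hx
      exact ⟨i, Finset.mem_univ i, hi⟩
    · by_contra hxy
      exact hcr i (Subtype.ext (hB.eq_of_mem_of_mem (c i).2 r.2 hxy hx.2 hy.2 hx.1 hy.1))
  rw [hB.2.1 _ r.2, Finset.card_univ, Fintype.card_fin] at hle
  exact hj.not_ge hle

lemma exists_mem_evaderSafe (hB : IsBIBD P B v k) {c : Fin j → {b // b ∈ B}} {x : P}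
    (hx : ∀ i, x ∉ (c i).1) (hv : j * k * (k - 1) + 1 < v) :
    ∃ r : {b // b ∈ B}, x ∈ r.1 ∧ EvaderSafe (blockGraph B) c r := by
  classical
  let U : Finset P := Finset.univ.biUnion fun i => (c i).1
  have hxU : x ∉ U := by simpa [U] using hx
  have hU : U.card * (k - 1) + 1 < v := lt_of_le_of_lt (by gcongr; exact hB.card_biUnion_le c) hv
  obtain ⟨b, hb, hxb, hdisj⟩ := hB.exists_mem_block_disjoint hxU hU
  refine ⟨⟨b, hb⟩, hxb, (evaderSafe_blockGraph_iff ⟨x, hxb⟩).2 fun i => ?_⟩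
  exact ((Finset.disjoint_biUnion_right _ _ _).1 hdisj i (Finset.mem_univ i)).symm

theorem not_copsWinWith (hB : IsBIBD P B v k) (hj : j < k) (hv : j * k * (k - 1) + 1 < v) :
    ¬ CopsWinWith (blockGraph B) j := by
  refine not_copsWinWith_of_evaderSafe (fun c => ?_) fun c r hcr => ?_
  · have hk : 0 < k - 1 := Nat.sub_pos_of_lt (hB.one_lt_blockSize (by omega))
    have hjk : j * k ≤ j * k * (k - 1) := Nat.le_mul_of_pos_right _ hk
    obtain ⟨x, hx⟩ := hB.exists_forall_notMem c (by omega)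
    obtain ⟨r, -, hr⟩ := hB.exists_mem_evaderSafe hx hv
    exact ⟨r, hr⟩
  · obtain ⟨x, hxr, hx⟩ := hB.exists_mem_forall_notMem hcr hj
    obtain ⟨r', hxr', hr'⟩ := hB.exists_mem_evaderSafe hx hv
    refine ⟨r', or_iff_not_imp_left.2 fun hne => ?_, hr'⟩
    exact blockGraph_adj.2 ⟨Ne.symm hne, x, hxr, hxr'⟩

lemma exists_mem_adj_adj (hB : IsBIBD P B v k) {a b : {b // b ∈ B}} (hab : Disjoint a.1 b.1)
    (ha : a.1.Nonempty) {p : P} (hp : p ∈ b.1) :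
    ∃ s : {b // b ∈ B}, p ∈ s.1 ∧ (blockGraph B).Adj a s ∧ (blockGraph B).Adj s b := by
  obtain ⟨q, hq⟩ := ha
  obtain ⟨s, hs, hqs, hps⟩ := (hB.2.2 q p (Finset.disjoint_iff_ne.1 hab q hq p hp)).exists
  have has : a ≠ ⟨s, hs⟩ := fun h => Finset.disjoint_left.1 hab (h ▸ hps) hp
  have hsb : ⟨s, hs⟩ ≠ b := fun h => Finset.disjoint_left.1 hab hq (h ▸ hqs)
  exact ⟨⟨s, hs⟩, hps, blockGraph_adj.2 ⟨has, q, hq, hqs⟩, blockGraph_adj.2 ⟨hsb, p, hps, hp⟩⟩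

lemma zombiesTrap (hB : IsBIBD P B v k) (hk : 0 < k) : ZombiesTrap (blockGraph B) k := by
  have hne : ∀ b : {b // b ∈ B}, b.1.Nonempty := fun b => hB.nonempty_of_mem hk b.2
  intro c r hsafe
  let e : r.1 ≃ Fin k := r.1.equivFinOfCardEq (hB.2.1 _ r.2)
  have hdisj := (evaderSafe_blockGraph_iff (hne r)).1 hsafe
  choose s hs_mem hs_adj using fun i =>
    hB.exists_mem_adj_adj (hdisj i) (hne (c i)) (e.symm i).2
  refine ⟨s, hs_adj, fun r' hr' hsafe' => ?_⟩
  obtain ⟨p, hpr, hpr'⟩ := exists_mem_of_eq_or_adj (hne r) hr'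
  have hps : p ∈ (s (e ⟨p, hpr⟩)).1 := by simpa using hs_mem (e ⟨p, hpr⟩)
  exact Finset.disjoint_left.1 ((evaderSafe_blockGraph_iff (hne r')).1 hsafe' _) hps hpr'

theorem zombiesWinWith (hB : IsBIBD P B v k) (hv : 1 < v) : ZombiesWinWith (blockGraph B) k := by
  obtain ⟨b, hb, -⟩ := hB.exists_pair_mem_block hv
  have : Nonempty {b // b ∈ B} := ⟨⟨b, hb⟩⟩
  exact (hB.zombiesTrap (zero_lt_one.trans (hB.one_lt_blockSize hv))).zombiesWinWith

end IsBIBD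

/-- If `G` is the block intersection graph of a balanced incomplete block design with
parameters `(v, k, 1)` and `v > k(k-1)² + 1`, then `c(G) = z(G) = k`. -/
theorem cop_and_zombie_number_blockGraph {P : Type*} [Fintype P] (B : Finset (Finset P))
    (v k : ℕ) (hB : IsBIBD P B v k) (hv : k * (k - 1) ^ 2 + 1 < v) :
    copNumber (blockGraph B) = k ∧ zombieNumber (blockGraph B) = k := by
  have hzombies : ZombiesWinWith (blockGraph B) k := hB.zombiesWinWith (by omega)
  have hcops : ∀ j, CopsWinWith (blockGraph B) j → k ≤ j := by
    intro j hwin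
    by_contra! hj
    have hjk : j * k * (k - 1) ≤ k * (k - 1) ^ 2 := calc
      j * k * (k - 1) ≤ (k - 1) * k * (k - 1) := by gcongr; exact Nat.le_sub_one_of_lt hj
      _ = k * (k - 1) ^ 2 := by ring
    exact hB.not_copsWinWith hj (by omega) hwin
  exact ⟨IsLeast.csInf_eq ⟨hzombies.copsWinWith, hcops⟩,
    IsLeast.csInf_eq ⟨hzombies, fun j hwin => hcops j hwin.copsWinWith⟩⟩
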